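/- arXiv:2504.02986 — 2 statements merged into one kernel-verified Lean document; each statement's English description precedes it below -/
import Mathlib

section
/- Let f : ℝ^n → ℝ^m, let Ω ⊆ ℝ^n, and let Y ⊂ ℝ^m be a nonempty finite set whose elements are pairwise incomparable (for all r¹, r² ∈ Y, neither r¹ ≤ r² nor r² ≤ r¹). If x¹, x² ∈ Ω satisfy f(x¹) ≤ f(x²) (componentwise inequality with at least one strict component), then ψ^Do_Y(x¹) ≤ ψ^Do_Y(x²). -/
/-- `r` dominates `y` in the Pareto sense: `r ≤ y` componentwise with at least
one strict inequality. -/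
def paretoLE {m : ℕ} (r y : Fin m → ℝ) : Prop :=
  (∀ i, r i ≤ y i) ∧ ∃ i, r i < y i

open Classical in
/-- The single-objective dominance move function `ψ^Do_Y`. -/
noncomputable def psiDo {n m : ℕ} (f : (Fin n → ℝ) → (Fin m → ℝ))
    (Y : Finset (Fin m → ℝ)) (hY : Y.Nonempty) (x : Fin n → ℝ) : ℝ :=
  if ∃ r ∈ Y, paretoLE r (f x) then
    Y.inf' hY fun r => ∑ i, max 0 (f x i - r i)
  else
    - Y.inf' hY fun r => ∑ i, max 0 (r i - f x i)

/-- Pareto dominance `f(x¹) ≤ f(x²)` (componentwise with at least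
one strict component) implies `ψ^Do_Y(x¹) ≤ ψ^Do_Y(x²)`. -/
theorem psiDo_mono {n m : ℕ} (f : (Fin n → ℝ) → (Fin m → ℝ))
    (Ω : Set (Fin n → ℝ)) (Y : Finset (Fin m → ℝ)) (hY : Y.Nonempty)
    (hinc : ∀ r1 ∈ Y, ∀ r2 ∈ Y, ¬ paretoLE r1 r2 ∧ ¬ paretoLE r2 r1)
    (x1 x2 : Fin n → ℝ) (hx1 : x1 ∈ Ω) (hx2 : x2 ∈ Ω)
    (hdom : paretoLE (f x1) (f x2)) :
    psiDo f Y hY x1 ≤ psiDo f Y hY x2 := by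
  have hle := hdom.1
  unfold psiDo
  split_ifs with h1 h2 h2
  · refine Finset.le_inf' _ _ fun r hr => (Finset.inf'_le _ hr).trans ?_
    exact Finset.sum_le_sum fun i _ => max_le_max le_rfl (by linarith [hle i])
  · exfalso
    obtain ⟨r, hr, ha, i, hi⟩ := h1
    exact h2 ⟨r, hr, fun j => (ha j).trans (hle j), i, hi.trans_le (hle i)⟩
  · have a : 0 ≤ Y.inf' hY fun r => ∑ i, max 0 (r i - f x1 i) :=
      Finset.le_inf' _ _ fun r _ => Finset.sum_nonneg fun i _ => le_max_left _ _
    have b : 0 ≤ Y.inf' hY fun r => ∑ i, max 0 (f x2 i - r i) :=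
      Finset.le_inf' _ _ fun r _ => Finset.sum_nonneg fun i _ => le_max_left _ _
    linarith
  · refine neg_le_neg (Finset.le_inf' _ _ fun r hr => (Finset.inf'_le _ hr).trans ?_)
    exact Finset.sum_le_sum fun i _ => max_le_max le_rfl (by linarith [hle i])
end

section
/- Let f : ℝ^n → ℝ^m, let Ω ⊆ ℝ^n, and let Y ⊂ ℝ^m be a nonempty finite set whose elements are pairwise incomparable (for all r¹, r² ∈ Y, neither r¹ ≤ r² nor r² ≤ r¹). If x̂ ∈ Ω is the unique minimizer of ψ^Do_Y over Ω, i.e., ψ^Do_Y(x̂) < ψ^Do_Y(x) for every x ∈ Ω with x ≠ x̂, then x̂ is Pareto optimal: there is no x ∈ Ω with f(x) ≤ f(x̂). -/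
/-- the unique minimizer of `ψ^Do_Y` over `Ω` is Pareto optimal. -/
theorem psiDo_unique_min_pareto_optimal {n m : ℕ} (f : (Fin n → ℝ) → (Fin m → ℝ))
    (Ω : Set (Fin n → ℝ)) (Y : Finset (Fin m → ℝ)) (hY : Y.Nonempty)
    (hinc : ∀ r1 ∈ Y, ∀ r2 ∈ Y, ¬ paretoLE r1 r2 ∧ ¬ paretoLE r2 r1)
    (xhat : Fin n → ℝ) (hxhat : xhat ∈ Ω)
    (hmin : ∀ x ∈ Ω, x ≠ xhat → psiDo f Y hY xhat < psiDo f Y hY x) :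
    ¬ ∃ x ∈ Ω, paretoLE (f x) (f xhat) := by
  rintro ⟨x, hx, hle, i₀, hi₀⟩
  have hne : x ≠ xhat := by
    rintro rfl
    exact lt_irrefl _ hi₀
  have hlt := hmin x hx hne
  refine absurd hlt (not_lt.mpr ?_)
  unfold psiDo
  by_cases h1 : ∃ r ∈ Y, paretoLE r (f x)
  · have h2 : ∃ r ∈ Y, paretoLE r (f xhat) := by
      obtain ⟨r, hr, h, j, hj⟩ := h1
      exact ⟨r, hr, fun i => (h i).trans (hle i), j, hj.trans_le (hle j)⟩
    rw [if_pos h1, if_pos h2]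
    refine Finset.le_inf' _ _ fun r hr => (Finset.inf'_le _ hr).trans ?_
    exact Finset.sum_le_sum fun i _ => max_le_max le_rfl (sub_le_sub_right (hle i) _)
  · rw [if_neg h1]
    by_cases h2 : ∃ r ∈ Y, paretoLE r (f xhat)
    · rw [if_pos h2]
      have a : 0 ≤ Y.inf' hY fun r => ∑ i, max 0 (r i - f x i) :=
        Finset.le_inf' _ _ fun r _ => Finset.sum_nonneg fun i _ => le_max_left _ _
      have b : 0 ≤ Y.inf' hY fun r => ∑ i, max 0 (f xhat i - r i) :=
        Finset.le_inf' _ _ fun r _ => Finset.sum_nonneg fun i _ => le_max_left _ _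
      linarith
    · rw [if_neg h2]
      refine neg_le_neg (Finset.le_inf' _ _ fun r hr => (Finset.inf'_le _ hr).trans ?_)
      exact Finset.sum_le_sum fun i _ => max_le_max le_rfl (sub_le_sub_left (hle i) _)
end
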